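/- Let X be a real Hilbert space, Q : X → X a bounded self-adjoint positive operator with bounded inverse Q⁻¹, f₀ ∈ X, and let G₀ = {f ∈ X : ⟪Q(f − f₀), f − f₀⟫ ≤ 1}. Then for every z ∈ X, the infimum over c ∈ ℝ of the supremum over f ∈ G₀ of (⟪f, z⟫ + c)² equals ⟪Q⁻¹z, z⟫, and this infimum is attained at c = −⟪f₀, z⟫. -/

import Mathlib

local notation "⟪" x ", " y "⟫" => @inner ℝ _ _ x y

/-!
Write `a = ⟪f₀, z⟫` and `r = √⟪Q⁻¹z, z⟫`. By Cauchy-Schwarz for the form `⟪Q ·, ·⟫`, the functional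
`⟪·, z⟫ = ⟪Q ·, Q⁻¹z⟫` maps the ellipsoid onto the interval `[a - r, a + r]`. The largest value of
`(s + c) ^ 2` on that interval is `(|a + c| + r) ^ 2`, which is smallest, with value `r ^ 2`, when
`c = -a`.
-/

open Set

theorem isGreatest_image_sq_add_Icc {r : ℝ} (hr : 0 ≤ r) (a c : ℝ) :
    IsGreatest ((fun s ↦ (s + c) ^ 2) '' Icc (a - r) (a + r)) ((|a + c| + r) ^ 2) := by
  constructor
  · rcases abs_cases (a + c) with ⟨habs, -⟩ | ⟨habs, -⟩
    · exact ⟨a + r, ⟨by linarith, le_rfl⟩, by rw [habs]; ring⟩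
    · exact ⟨a - r, ⟨le_rfl, by linarith⟩, by rw [habs]; ring⟩
  · rintro _ ⟨s, hs, rfl⟩
    have hdist : |a - s| ≤ r := mem_Icc_iff_abs_le.mpr hs
    refine sq_le_sq' ?_ ?_ <;> linarith [abs_le.mp hdist, neg_abs_le (a + c), le_abs_self (a + c)]

section BilinForm

variable {V : Type*} [AddCommGroup V] [Module ℝ V] {B : LinearMap.BilinForm ℝ V}

/-- The ellipsoid with centre `f₀` cut out by the quadratic form `f ↦ B f f`. The form may be
degenerate, in which case the ellipsoid is a cylinder. -/
def ellipsoid (B : LinearMap.BilinForm ℝ V) (f₀ : V) : Set V :=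
  {f | B (f - f₀) (f - f₀) ≤ 1}

theorem abs_apply_sub_le_sqrt_of_mem_ellipsoid (hB : B.IsPosSemidef) {f f₀ : V}
    (hf : f ∈ ellipsoid B f₀) (w : V) : |B w (f - f₀)| ≤ √(B w w) := by
  refine Real.abs_le_sqrt ?_
  calc B w (f - f₀) ^ 2
    _ ≤ B w w * B (f - f₀) (f - f₀) :=
        B.apply_sq_le_of_symm hB.nonneg (LinearMap.BilinForm.isSymm_iff.mp hB.isSymm) w (f - f₀)
    _ ≤ B w w := mul_le_of_le_one_right (hB.nonneg w) hf

theorem exists_mem_ellipsoid_apply_eq_add (hB : B.IsPosSemidef) (f₀ w : V) {t : ℝ}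
    (ht : |t| ≤ √(B w w)) : ∃ f ∈ ellipsoid B f₀, B w f = B w f₀ + t := by
  have ht_sq : t ^ 2 ≤ B w w := (Real.sq_le (hB.nonneg w)).mpr (abs_le.mp ht)
  rcases (hB.nonneg w).eq_or_lt with hw | hw
  · have ht_zero : t = 0 := by simpa [← hw] using ht
    exact ⟨f₀, by simp [ellipsoid], by simp [ht_zero]⟩
  · refine ⟨f₀ + (t / B w w) • w, ?_, ?_⟩
    · calc B (f₀ + (t / B w w) • w - f₀) (f₀ + (t / B w w) • w - f₀)
        _ = t ^ 2 / B w w := by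
          simp only [add_sub_cancel_left, map_smul, LinearMap.smul_apply, smul_eq_mul]
          field_simp
        _ ≤ 1 := (div_le_one hw).mpr ht_sq
    · simp only [map_add, map_smul, smul_eq_mul, div_mul_cancel₀ t hw.ne']

theorem image_apply_ellipsoid (hB : B.IsPosSemidef) (f₀ w : V) :
    B w '' ellipsoid B f₀ = Icc (B w f₀ - √(B w w)) (B w f₀ + √(B w w)) := by
  ext s
  rw [← mem_Icc_iff_abs_le, abs_sub_comm]
  constructor
  · rintro ⟨f, hf, rfl⟩
    rw [← map_sub]
    exact abs_apply_sub_le_sqrt_of_mem_ellipsoid hB hf w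
  · intro hs
    obtain ⟨f, hf, hfs⟩ := exists_mem_ellipsoid_apply_eq_add hB f₀ w hs
    exact ⟨f, hf, by rw [hfs, add_sub_cancel]⟩

theorem isGreatest_image_sq_apply_add_ellipsoid (hB : B.IsPosSemidef) (f₀ w : V) (c : ℝ) :
    IsGreatest ((fun f ↦ (B w f + c) ^ 2) '' ellipsoid B f₀)
      ((|B w f₀ + c| + √(B w w)) ^ 2) := by
  rw [← image_image (fun s ↦ (s + c) ^ 2) (B w), image_apply_ellipsoid hB]
  exact isGreatest_image_sq_add_Icc (Real.sqrt_nonneg _) _ c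

end BilinForm

section InnerProductSpace

variable {X : Type*} [NormedAddCommGroup X] [InnerProductSpace ℝ X] {Q : X →ₗ[ℝ] X}

theorem isPosSemidef_innerₗ_comp (hQ : Q.IsPositive) :
    LinearMap.BilinForm.IsPosSemidef (innerₗ X ∘ₗ Q) where
  eq x y := (hQ.isSymmetric x y).trans (real_inner_comm _ _)
  nonneg := hQ.re_inner_nonneg_left

theorem isGreatest_sq_inner_add_ellipsoid (hQ : Q.IsPositive) {w z : X} (hwz : Q w = z)
    (f₀ : X) (c : ℝ) :
    IsGreatest {y : ℝ | ∃ f : X, ⟪Q (f - f₀), f - f₀⟫ ≤ 1 ∧ y = (⟪f, z⟫ + c) ^ 2}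
      ((|⟪f₀, z⟫ + c| + √⟪w, z⟫) ^ 2) := by
  subst hwz
  simpa only [image, ellipsoid, mem_ofPred_eq, LinearMap.comp_apply, innerₗ_apply_apply,
    real_inner_comm (Q w), eq_comm] using
    isGreatest_image_sq_apply_add_ellipsoid (isPosSemidef_innerₗ_comp hQ) f₀ w c

theorem inf_sup_over_ellipsoid_general (hQ : Q.IsPositive) {w z : X} (hwz : Q w = z) (f₀ : X) :
    sSup {y : ℝ | ∃ f : X, ⟪Q (f - f₀), f - f₀⟫ ≤ 1 ∧ y = (⟪f, z⟫ + (-⟪f₀, z⟫)) ^ 2}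
        = ⟪w, z⟫ ∧
    ∀ c : ℝ, ⟪w, z⟫ ≤
        sSup {y : ℝ | ∃ f : X, ⟪Q (f - f₀), f - f₀⟫ ≤ 1 ∧ y = (⟪f, z⟫ + c) ^ 2} := by
  have hsqrt : √⟪w, z⟫ ^ 2 = ⟪w, z⟫ := Real.sq_sqrt (hwz ▸ hQ.inner_nonneg_right w)
  simp only [(isGreatest_sq_inner_add_ellipsoid hQ hwz f₀ _).csSup_eq]
  refine ⟨by rw [add_neg_cancel, abs_zero, zero_add, hsqrt], fun c ↦ ?_⟩
  calc ⟪w, z⟫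
    _ = √⟪w, z⟫ ^ 2 := hsqrt.symm
    _ ≤ (|⟪f₀, z⟫ + c| + √⟪w, z⟫) ^ 2 := by gcongr; exact le_add_of_nonneg_left (abs_nonneg _)

end InnerProductSpace

/-- For `Q` a bounded self-adjoint positive operator with bounded inverse on a real
Hilbert space `X`, `f₀ ∈ X`, and `G₀ = {f : ⟪Q(f - f₀), f - f₀⟫ ≤ 1}`, the infimum
over `c ∈ ℝ` of the supremum over `f ∈ G₀` of `(⟪f, z⟫ + c)²` equals `⟪Q⁻¹z, z⟫`,
attained at `c = -⟪f₀, z⟫`. -/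
theorem inf_sup_over_ellipsoid
    {X : Type*} [NormedAddCommGroup X] [InnerProductSpace ℝ X] [CompleteSpace X]
    (Q Qinv : X →L[ℝ] X)
    (hQsa : ∀ x y : X, ⟪Q x, y⟫ = ⟪x, Q y⟫)
    (hQpos : ∀ x : X, 0 ≤ ⟪Q x, x⟫)
    (hinv₁ : ∀ x : X, Q (Qinv x) = x)
    (hinv₂ : ∀ x : X, Qinv (Q x) = x)
    (f₀ z : X) :
    sSup {y : ℝ | ∃ f : X, ⟪Q (f - f₀), f - f₀⟫ ≤ 1 ∧ y = (⟪f, z⟫ + (-⟪f₀, z⟫)) ^ 2}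
        = ⟪Qinv z, z⟫ ∧
    ∀ c : ℝ, ⟪Qinv z, z⟫ ≤
        sSup {y : ℝ | ∃ f : X, ⟪Q (f - f₀), f - f₀⟫ ≤ 1 ∧ y = (⟪f, z⟫ + c) ^ 2} := by
  exact inf_sup_over_ellipsoid_general (Q := Q.toLinearMap) ⟨hQsa, hQpos⟩ (hinv₁ z) f₀
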